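/- Let c > 0 and let F_2 : (0,1) → (1,∞) be the function F_2(x) = ln x/(x−1). Then lim_{n→∞} Pr_{Φ ∈ Ω(2,n,⌊cn⌋)}[Φ is satisfiable] equals 1 if c ≤ 3/2, and equals F_2^{−1}(2c/3) if c > 3/2. -/

import Mathlib

open scoped BigOperators

/-- A clause over `n` propositional variables: a finite set of literals,
where a literal is a pair (variable, polarity) with `true` = positive. -/
abbrev Clause (n : ℕ) := Finset (Fin n × Bool)

/-- A Horn clause: nonempty, with at most one positive literal. -/
def IsHornClause {n : ℕ} (C : Clause n) : Prop :=
  C.Nonempty ∧ (C.filter fun l => l.2 = true).card ≤ 1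

/-- The Horn clauses over `n` variables of length at most `k`. -/
def HornClauseLe (n k : ℕ) := {C : Clause n // IsHornClause C ∧ C.card ≤ k}

/-- The truth assignment `A` satisfies the clause `C`. -/
def SatClause {n : ℕ} (A : Fin n → Bool) (C : Clause n) : Prop :=
  ∃ l ∈ C, A l.1 = l.2

/-- A formula of the model `Ω(k,n,m)`: an (ordered) tuple of `m` Horn clauses
of length at most `k`; it is satisfiable if some assignment satisfies all clauses. -/
def SatFormula {n k m : ℕ} (F : Fin m → HornClauseLe n k) : Prop :=
  ∃ A : Fin n → Bool, ∀ i, SatClause A (F i).1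

/-- The probability that a random formula of `Ω(k,n,m)` (with the `m` clauses drawn
independently and uniformly from the Horn clauses of length at most `k`,
with repetition) is satisfiable. -/
noncomputable def satProb (k n m : ℕ) : ℝ :=
  (Nat.card {F : Fin m → HornClauseLe n k // SatFormula F} : ℝ) /
    (Nat.card (Fin m → HornClauseLe n k) : ℝ)

/-- `H_k(n)`: the number of Horn clauses of length at most `k` over `n` variables. -/
noncomputable def Hcount (k n : ℕ) : ℕ := Nat.card (HornClauseLe n k)


open Filter Topology

/-!
Satisfiability becomes less likely with every further clause, and for a Poisson number of clauses
each of the about `3 n² / 2` clauses is missing independently of the others. By Chernoff bounds it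
thus suffices to let every clause be missing with probability `q = exp (-l / n)`, with `l` close to
`2 c / 3`.

The clauses with a positive literal have a least model, and the formula is satisfiable iff this
model satisfies the other clauses. Over `N` variables the least model has `k` true variables with
probability `P_N(k) = C(N, k) p_k q ^ ((k + 1) (N - k))`, where `p_k` does not depend on `N`: it is
the probability that in a random digraph on a root and `k` vertices all vertices are reachable from
the root. Therefore `∑ k, P_N(k) = 1` for every `N`, while the formula is satisfiable with
probability `∑ k, P_n(k) q ^ C(k + 1, 2)`.

The trick is to compare `n` variables with `N = ⌊x n⌋` variables for the same `q`, where `x < 1`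
solves `log x = l (x - 1)`: for fixed `k` the ratio `P_n(k) / P_N(k)` tends to
`x ^ (-k) exp (-l (k + 1) (1 - x)) = x`. Both sums are dominated by geometric series, because
`l > 1` and `l x < 1`. Hence the probability of satisfiability tends to `x`.
-/

section RandomSubset

variable {α : Type*}

lemma apply_eq_of_sum_powerset_eq {M : Type*} [AddCancelCommMonoid M]
    {f g : Finset α → M} {Y : Finset α} (hsum : ∑ X ∈ Y.powerset, f X = ∑ X ∈ Y.powerset, g X)
    (hssubset : ∀ X, X ⊂ Y → f X = g X) : f Y = g Y := by
  classical
  have hproper : ∑ X ∈ Y.powerset.erase Y, f X = ∑ X ∈ Y.powerset.erase Y, g X :=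
    Finset.sum_congr rfl fun X hX => hssubset X (Finset.mem_ssubsets.1 hX)
  rw [← Finset.sum_erase_add _ _ (Finset.mem_powerset_self Y),
    ← Finset.sum_erase_add _ _ (Finset.mem_powerset_self Y), hproper] at hsum
  exact add_left_cancel hsum

variable [Fintype α]

/-- The probability that a random subset of `α`, from which every element is left out
independently with probability `q`, equals `X`. -/
def subsetWeight (q : ℝ) (X : Finset α) : ℝ :=
  (1 - q) ^ X.card * q ^ (Fintype.card α - X.card)

open Classical in
/-- The probability of the event `E` for a random subset of `α` from which every element is left
out independently with probability `q`. -/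
noncomputable def subsetProb (q : ℝ) (E : Finset α → Prop) : ℝ :=
  ∑ X with E X, subsetWeight q X

lemma subsetWeight_nonneg {q : ℝ} (hq : q ∈ Set.Icc 0 1) (X : Finset α) : 0 ≤ subsetWeight q X :=
  mul_nonneg (pow_nonneg (sub_nonneg.2 hq.2) _) (pow_nonneg hq.1 _)

lemma subsetProb_nonneg {q : ℝ} (hq : q ∈ Set.Icc 0 1) (E : Finset α → Prop) :
    0 ≤ subsetProb q E :=
  Finset.sum_nonneg fun X _ => subsetWeight_nonneg hq X

lemma subsetProb_mono {q : ℝ} (hq : q ∈ Set.Icc 0 1) {E E' : Finset α → Prop}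
    (h : ∀ X, E X → E' X) : subsetProb q E ≤ subsetProb q E' := by
  classical
  exact Finset.sum_le_sum_of_subset_of_nonneg (Finset.monotone_filter_right _ fun X _ => h X)
    fun X _ _ => subsetWeight_nonneg hq X

lemma subsetProb_congr (q : ℝ) {E E' : Finset α → Prop} (h : ∀ X, E X ↔ E' X) :
    subsetProb q E = subsetProb q E' := by
  rw [funext fun X => propext (h X)]

lemma sum_powerset_subsetWeight (q : ℝ) (Y : Finset α) :
    ∑ X ∈ Y.powerset, subsetWeight q X = q ^ (Fintype.card α - Y.card) := by
  have hfactor : ∀ X ∈ Y.powerset, subsetWeight q X =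
      q ^ (Fintype.card α - Y.card) * ((1 - q) ^ X.card * q ^ (Y.card - X.card)) := by
    intro X hX
    rw [subsetWeight, ← Nat.sub_add_sub_cancel (Finset.card_le_univ Y)
      (Finset.card_le_card (Finset.mem_powerset.1 hX)), pow_add]
    ring
  rw [Finset.sum_congr rfl hfactor, ← Finset.mul_sum, Finset.sum_pow_mul_eq_add_pow,
    sub_add_cancel, one_pow, mul_one]

lemma subsetProb_true (q : ℝ) : subsetProb q (fun _ : Finset α => True) = 1 := by
  simpa [subsetProb] using sum_powerset_subsetWeight q (Finset.univ : Finset α)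

lemma subsetProb_eq_sum_of_existsUnique {ι : Type*} (q : ℝ) (s : Finset ι) {E : Finset α → Prop}
    {D : ι → Finset α → Prop} (h : ∀ X, E X → ∃! i, i ∈ s ∧ D i X) :
    subsetProb q E = ∑ i ∈ s, subsetProb q (fun X => D i X ∧ E X) := by
  classical
  simp only [subsetProb, Finset.sum_filter]
  rw [Finset.sum_comm]
  refine Finset.sum_congr rfl fun X _ => ?_
  split_ifs with hE
  · obtain ⟨i, ⟨his, hiX⟩, hunique⟩ := h X hE
    rw [Finset.sum_eq_single_of_mem i his fun j hjs hji =>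
      if_neg fun hj => hji (hunique j ⟨hjs, hj.1⟩), if_pos ⟨hiX, hE⟩]
  · exact (Finset.sum_eq_zero fun i _ => if_neg fun hi => hE hi.2).symm

variable [DecidableEq α]

lemma sum_univ_eq_sum_powerset_erase_add_insert {M : Type*} [AddCommMonoid M]
    (f : Finset α → M) (b : α) :
    ∑ X, f X = ∑ X ∈ (Finset.univ.erase b).powerset, (f X + f (insert b X)) := by
  rw [Finset.sum_add_distrib, ← Finset.sum_powerset_insert (Finset.notMem_erase _ _),
    Finset.insert_erase (Finset.mem_univ _), Finset.powerset_univ]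

lemma subsetWeight_eq_mul_add_insert (q : ℝ) {b : α} {X : Finset α} (hb : b ∉ X) :
    subsetWeight q X = q * (subsetWeight q X + subsetWeight q (insert b X)) := by
  obtain ⟨d, hd⟩ := Nat.exists_eq_add_of_le
    ((Finset.card_insert_of_notMem hb).symm.trans_le (Finset.card_le_univ (insert b X)))
  rw [subsetWeight, subsetWeight, Finset.card_insert_of_notMem hb, hd, Nat.add_sub_cancel_left,
    add_assoc, Nat.add_sub_cancel_left]
  ring

lemma subsetProb_and_notMem (q : ℝ) {E : Finset α → Prop} {b : α}
    (hE : ∀ X, E (insert b X) ↔ E X) :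
    subsetProb q (fun X => E X ∧ b ∉ X) = q * subsetProb q E := by
  classical
  simp only [subsetProb, Finset.sum_filter]
  rw [sum_univ_eq_sum_powerset_erase_add_insert _ b, sum_univ_eq_sum_powerset_erase_add_insert _ b,
    Finset.mul_sum]
  refine Finset.sum_congr rfl fun X hX => ?_
  have hb : b ∉ X := fun h => Finset.notMem_erase b _ (Finset.mem_powerset.1 hX h)
  by_cases hEX : E X
  · simpa [hE, hEX, hb] using subsetWeight_eq_mul_add_insert q hb
  · simp [hE, hEX]

lemma subsetProb_and_disjoint (q : ℝ) {E : Finset α → Prop} (B : Finset α)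
    (hE : ∀ b ∈ B, ∀ X, E (insert b X) ↔ E X) :
    subsetProb q (fun X => E X ∧ Disjoint X B) = q ^ B.card * subsetProb q E := by
  induction B using Finset.induction_on with
  | empty => simp
  | insert b B hb ih =>
    rw [Finset.card_insert_of_notMem hb, pow_succ', mul_assoc,
      ← ih fun b' hb' => hE b' (Finset.mem_insert_of_mem hb'), ← subsetProb_and_notMem]
    · refine subsetProb_congr q fun X => ?_
      rw [Finset.disjoint_insert_right, and_assoc, and_comm (a := b ∉ X)]
    · intro X
      rw [hE b (Finset.mem_insert_self _ _), Finset.disjoint_insert_left, and_iff_right hb]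

lemma subsetProb_and_not_disjoint (q : ℝ) {E : Finset α → Prop} (B : Finset α)
    (hE : ∀ b ∈ B, ∀ X, E (insert b X) ↔ E X) :
    subsetProb q (fun X => E X ∧ ¬ Disjoint X B) = (1 - q ^ B.card) * subsetProb q E := by
  classical
  have hsplit : subsetProb q (fun X => E X ∧ Disjoint X B) +
      subsetProb q (fun X => E X ∧ ¬ Disjoint X B) = subsetProb q E := by
    simp only [subsetProb, ← Finset.filter_filter]
    exact Finset.sum_filter_add_sum_filter_not _ _ _
  rw [subsetProb_and_disjoint q B hE] at hsplit
  linarith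

end RandomSubset

section LeastModel

lemma disjoint_insert_left_iff_of_notMem {α : Type*} [DecidableEq α] {X B : Finset α} {b : α}
    (hb : b ∉ B) : Disjoint (insert b X) B ↔ Disjoint X B := by
  rw [Finset.disjoint_insert_left, and_iff_right hb]

/-- Codes of the Horn clauses of length at most two over the variables `V`: `inl (none, v)` is the
unit clause `v`, `inl (some u, v)` is `¬u ∨ v` (tautological if `u = v`), and `inr s(u, v)` is
`¬u ∨ ¬v` (a unit clause if `u = v`). -/
abbrev HornCode (V : Type*) := (Option V × V) ⊕ Sym2 V

variable {V : Type*}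

/-- The clauses without positive literal violated by the assignment with set of true variables
`S`. -/
def negativeViolated (S : Finset V) : Finset (HornCode V) :=
  S.sym2.map Function.Embedding.inr

lemma inr_mem_negativeViolated {S : Finset V} {s : Sym2 V} :
    Sum.inr s ∈ negativeViolated S ↔ s ∈ S.sym2 :=
  Finset.mem_map' _

lemma inl_notMem_negativeViolated {S : Finset V} {c : Option V × V} :
    Sum.inl c ∉ negativeViolated S := by
  simp [negativeViolated]

lemma negativeViolated_mono : Monotone (negativeViolated (V := V)) :=
  fun _ _ h => Finset.map_subset_map.2 (Finset.sym2_mono h)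

lemma card_negativeViolated (S : Finset V) :
    (negativeViolated S).card = (S.card + 1).choose 2 := by
  rw [negativeViolated, Finset.card_map, Finset.card_sym2]

variable [Fintype V]

lemma card_hornCode :
    Fintype.card (HornCode V) =
      (Fintype.card V + 1) * Fintype.card V + (Fintype.card V + 1).choose 2 := by
  rw [Fintype.card_sum, Fintype.card_prod, Fintype.card_option, Sym2.card]

variable [DecidableEq V]

/-- The clauses with a positive literal violated by the assignment with set of true variables
`S`. -/
def definiteViolated (S : Finset V) : Finset (HornCode V) :=
  (Finset.insertNone S ×ˢ Sᶜ).map Function.Embedding.inl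

/-- The assignment with set of true variables `S` satisfies all clauses in `X` with a positive
literal. -/
def IsDefiniteModel (X : Finset (HornCode V)) (S : Finset V) : Prop :=
  Disjoint X (definiteViolated S)

/-- The clauses in `X` are simultaneously satisfiable. -/
def HornSatisfiable (X : Finset (HornCode V)) : Prop :=
  ∃ S, IsDefiniteModel X S ∧ Disjoint X (negativeViolated S)

lemma inl_mem_definiteViolated {S : Finset V} {o : Option V} {v : V} :
    Sum.inl (o, v) ∈ definiteViolated S ↔ (∀ u ∈ o, u ∈ S) ∧ v ∉ S := by
  simp [definiteViolated, Finset.mem_insertNone]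

lemma inr_notMem_definiteViolated {S : Finset V} {s : Sym2 V} :
    Sum.inr s ∉ definiteViolated S := by
  simp [definiteViolated]

lemma card_definiteViolated (S : Finset V) :
    (definiteViolated S).card = (S.card + 1) * (Fintype.card V - S.card) := by
  rw [definiteViolated, Finset.card_map, Finset.card_product, Finset.card_insertNone,
    Finset.card_compl]

lemma definiteViolated_inter_subset (S T : Finset V) :
    definiteViolated (S ∩ T) ⊆ definiteViolated S ∪ definiteViolated T := by
  rintro (⟨o, v⟩ | s) hc
  · simp only [Finset.mem_union, inl_mem_definiteViolated, Finset.mem_inter, not_and_or] at hc ⊢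
    exact hc.2.imp (⟨fun u hu => (hc.1 u hu).1, ·⟩) (⟨fun u hu => (hc.1 u hu).2, ·⟩)
  · exact absurd hc inr_notMem_definiteViolated

lemma definiteViolated_inter_subset_of_subset {R S T : Finset V} (hRT : R ⊆ T) (hTS : T ⊆ S) :
    definiteViolated R ∩ definiteViolated S ⊆ definiteViolated T := by
  rintro (⟨o, v⟩ | s) hc
  · simp only [Finset.mem_inter, inl_mem_definiteViolated] at hc ⊢
    exact ⟨fun u hu => hRT (hc.1.1 u hu), fun hv => hc.2.2 (hTS hv)⟩
  · exact absurd (Finset.mem_inter.1 hc).1 inr_notMem_definiteViolated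

lemma card_definiteViolated_sdiff {S T : Finset V} (hTS : T ⊆ S) :
    (definiteViolated S \ definiteViolated T).card =
      (S.card - T.card) * (Fintype.card V - S.card) := by
  have heq : definiteViolated S \ definiteViolated T =
      ((Finset.insertNone S \ Finset.insertNone T) ×ˢ Sᶜ).map Function.Embedding.inl := by
    ext (⟨o, v⟩ | s)
    · have := @hTS v
      simp only [definiteViolated, Finset.mem_sdiff, Finset.mem_map', Finset.mem_product,
        Finset.mem_compl, ← Function.Embedding.inl_apply (α := Option V × V) (β := Sym2 V)]
      tauto
    · simp [definiteViolated]
  rw [heq, Finset.card_map, Finset.card_product, Finset.card_compl,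
    Finset.card_sdiff_of_subset (Finset.insertNone.monotone hTS), Finset.card_insertNone,
    Finset.card_insertNone, Nat.add_sub_add_right]

lemma IsDefiniteModel.inter {X : Finset (HornCode V)} {S T : Finset V} (hS : IsDefiniteModel X S)
    (hT : IsDefiniteModel X T) : IsDefiniteModel X (S ∩ T) :=
  (Finset.disjoint_union_right.2 ⟨hS, hT⟩).mono_right (definiteViolated_inter_subset S T)

lemma isDefiniteModel_univ (X : Finset (HornCode V)) : IsDefiniteModel X Finset.univ := by
  simp [IsDefiniteModel, definiteViolated]

lemma subset_of_minimal_isDefiniteModel {X : Finset (HornCode V)} {S T : Finset V}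
    (hS : Minimal (IsDefiniteModel X) S) (hT : IsDefiniteModel X T) : S ⊆ T :=
  (hS.2 (hS.1.inter hT) Finset.inter_subset_left).trans Finset.inter_subset_right

lemma existsUnique_minimal_isDefiniteModel {X : Finset (HornCode V)} {S : Finset V}
    (hS : IsDefiniteModel X S) : ∃! T, T ∈ S.powerset ∧ Minimal (IsDefiniteModel X) T := by
  obtain ⟨T, hTS, hT⟩ := exists_minimal_le_of_wellFoundedLT (IsDefiniteModel X) S hS
  exact ⟨T, ⟨Finset.mem_powerset.2 hTS, hT⟩, fun R hR => subset_antisymm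
    (subset_of_minimal_isDefiniteModel hR.2 hT.1) (subset_of_minimal_isDefiniteModel hT hR.2.1)⟩

lemma minimal_isDefiniteModel_insert {S : Finset V} {b : HornCode V}
    (hb : ∀ T ⊆ S, b ∉ definiteViolated T) (X : Finset (HornCode V)) :
    Minimal (IsDefiniteModel (insert b X)) S ↔ Minimal (IsDefiniteModel X) S := by
  have hmodel : ∀ T ⊆ S, IsDefiniteModel (insert b X) T ↔ IsDefiniteModel X T :=
    fun T hT => disjoint_insert_left_iff_of_notMem (hb T hT)
  refine and_congr (hmodel S subset_rfl) (forall_congr' fun T => ?_)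
  rw [imp.swap, imp.swap (a := IsDefiniteModel X T)]
  exact imp_congr_right fun hT => by rw [hmodel T hT]

lemma hornSatisfiable_iff_of_minimal {X : Finset (HornCode V)} {S : Finset V}
    (hS : Minimal (IsDefiniteModel X) S) :
    HornSatisfiable X ↔ Disjoint X (negativeViolated S) :=
  ⟨fun ⟨_, hT, hXT⟩ =>
    hXT.mono_right (negativeViolated_mono (subset_of_minimal_isDefiniteModel hS hT)),
    fun h => ⟨S, hS.1, h⟩⟩

lemma isDefiniteModel_iff_of_isDefiniteModel {X : Finset (HornCode V)} {S T : Finset V}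
    (hT : IsDefiniteModel X T) :
    IsDefiniteModel X S ↔ Disjoint X (definiteViolated S \ definiteViolated T) := by
  refine ⟨fun h => h.mono_right Finset.sdiff_subset, fun h => ?_⟩
  exact (Finset.disjoint_union_right.2 ⟨h, hT⟩).mono_right le_sdiff_sup

end LeastModel

section ReachAllProb

/-- The probability that in the random digraph on `k` vertices and a root, in which every arc is
missing independently with probability `q`, all vertices can be reached from the root. The recursion
is over the number `i` of vertices that can be reached. -/
noncomputable def reachAllProb (q : ℝ) (k : ℕ) : ℝ :=
  1 - ∑ i : Fin k, (k.choose i : ℝ) * reachAllProb q i * q ^ ((i + 1 : ℕ) * (k - i))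

/-- The probability that the least model of a random set of Horn clauses over `N` variables, from
which every clause is left out independently with probability `q`, has `k` true variables. -/
noncomputable def leastModelCardProb (q : ℝ) (N k : ℕ) : ℝ :=
  (N.choose k : ℝ) * reachAllProb q k * q ^ ((k + 1) * (N - k))

lemma sum_leastModelCardProb (q : ℝ) (N : ℕ) :
    ∑ k ∈ Finset.range (N + 1), leastModelCardProb q N k = 1 := by
  rw [Finset.sum_range_succ, ← Fin.sum_univ_eq_sum_range]
  simp only [leastModelCardProb, Nat.choose_self, Nat.sub_self, mul_zero, pow_zero, mul_one,
    Nat.cast_one, one_mul]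
  rw [reachAllProb.eq_1 q N]
  exact add_sub_cancel _ _

lemma leastModelCardProb_eq_zero_of_lt (q : ℝ) {N k : ℕ} (h : N < k) :
    leastModelCardProb q N k = 0 := by
  rw [leastModelCardProb, Nat.choose_eq_zero_of_lt h, Nat.cast_zero, zero_mul, zero_mul]

lemma sum_powerset_reachAllProb (q : ℝ) {V : Type*} (S : Finset V) :
    ∑ T ∈ S.powerset, reachAllProb q T.card * q ^ ((T.card + 1) * (S.card - T.card)) = 1 := by
  rw [Finset.sum_powerset_apply_card
    (fun i => reachAllProb q i * q ^ ((i + 1) * (S.card - i))), ← sum_leastModelCardProb q S.card]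
  simp only [nsmul_eq_mul, leastModelCardProb, mul_assoc]

variable {V : Type*} [Fintype V] [DecidableEq V]

lemma subsetProb_isDefiniteModel (q : ℝ) (S : Finset V) :
    subsetProb q (fun X => IsDefiniteModel X S) =
      q ^ ((S.card + 1) * (Fintype.card V - S.card)) := by
  have h := subsetProb_and_disjoint q (E := fun _ => True) (definiteViolated S) (by simp)
  simp only [true_and, subsetProb_true, mul_one, card_definiteViolated] at h
  exact h

lemma subsetProb_minimal_and_isDefiniteModel (q : ℝ) {S T : Finset V} (hTS : T ⊆ S) :
    subsetProb q (fun X => Minimal (IsDefiniteModel X) T ∧ IsDefiniteModel X S) =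
      q ^ ((S.card - T.card) * (Fintype.card V - S.card)) *
        subsetProb q (fun X => Minimal (IsDefiniteModel X) T) := by
  rw [← card_definiteViolated_sdiff hTS, ← subsetProb_and_disjoint]
  · exact subsetProb_congr q fun X => and_congr_right fun hT =>
      isDefiniteModel_iff_of_isDefiniteModel hT.1
  · refine fun b hb => minimal_isDefiniteModel_insert fun R hR hbR => ?_
    rw [Finset.mem_sdiff] at hb
    exact hb.2 (definiteViolated_inter_subset_of_subset hR hTS (Finset.mem_inter.2 ⟨hbR, hb.1⟩))

lemma subsetProb_minimal_isDefiniteModel (q : ℝ) (S : Finset V) :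
    subsetProb q (fun X => Minimal (IsDefiniteModel X) S) =
      reachAllProb q S.card * q ^ ((S.card + 1) * (Fintype.card V - S.card)) := by
  induction S using Finset.strongInduction with
  | H S ih =>
    have hsum : ∑ T ∈ S.powerset,
        subsetProb q (fun X => Minimal (IsDefiniteModel X) T ∧ IsDefiniteModel X S) =
        ∑ T ∈ S.powerset, q ^ ((S.card + 1) * (Fintype.card V - S.card)) *
          (reachAllProb q T.card * q ^ ((T.card + 1) * (S.card - T.card))) := by
      rw [← subsetProb_eq_sum_of_existsUnique q _ fun X => existsUnique_minimal_isDefiniteModel,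
        subsetProb_isDefiniteModel, ← Finset.mul_sum, sum_powerset_reachAllProb, mul_one]
    have hS := apply_eq_of_sum_powerset_eq hsum fun T hT => ?_
    · rw [subsetProb_minimal_and_isDefiniteModel q subset_rfl] at hS
      simpa [mul_comm] using hS
    rw [subsetProb_minimal_and_isDefiniteModel q hT.subset, ih T hT, mul_left_comm, ← pow_add,
      mul_left_comm, ← pow_add]
    obtain ⟨a, ha⟩ := Nat.exists_eq_add_of_le (Finset.card_le_card hT.subset)
    obtain ⟨b, hb⟩ := Nat.exists_eq_add_of_le (Finset.card_le_univ S)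
    have hexponent : (S.card - T.card) * (Fintype.card V - S.card) +
        (T.card + 1) * (Fintype.card V - T.card) =
        (S.card + 1) * (Fintype.card V - S.card) + (T.card + 1) * (S.card - T.card) := by
      rw [hb, ha, Nat.add_sub_cancel_left, Nat.add_sub_cancel_left, add_assoc,
        Nat.add_sub_cancel_left]
      ring
    rw [hexponent]

lemma subsetProb_minimal_and_hornSatisfiable (q : ℝ) (S : Finset V) :
    subsetProb q (fun X => Minimal (IsDefiniteModel X) S ∧ HornSatisfiable X) =
      reachAllProb q S.card * q ^ ((S.card + 1) * (Fintype.card V - S.card)) *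
        q ^ (S.card + 1).choose 2 := by
  rw [← subsetProb_minimal_isDefiniteModel, mul_comm, ← card_negativeViolated,
    ← subsetProb_and_disjoint]
  · exact subsetProb_congr q fun X => and_congr_right hornSatisfiable_iff_of_minimal
  · rintro (c | s) hb
    · exact absurd hb inl_notMem_negativeViolated
    · exact minimal_isDefiniteModel_insert fun T _ => inr_notMem_definiteViolated

lemma subsetProb_hornSatisfiable (q : ℝ) :
    subsetProb q (fun X : Finset (HornCode V) => HornSatisfiable X) =
      ∑ k ∈ Finset.range (Fintype.card V + 1),
        leastModelCardProb q (Fintype.card V) k * q ^ (k + 1).choose 2 := by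
  rw [subsetProb_eq_sum_of_existsUnique q _ fun X _ =>
      existsUnique_minimal_isDefiniteModel (isDefiniteModel_univ X),
    Finset.sum_congr rfl fun S _ => subsetProb_minimal_and_hornSatisfiable q S,
    Finset.sum_powerset_apply_card (fun k => reachAllProb q k *
      q ^ ((k + 1) * (Fintype.card V - k)) * q ^ (k + 1).choose 2), Finset.card_univ]
  simp only [nsmul_eq_mul, leastModelCardProb, mul_assoc]

lemma reachAllProb_card (q : ℝ) :
    reachAllProb q (Fintype.card V) =
      subsetProb q (fun X => Minimal (IsDefiniteModel X) (Finset.univ : Finset V)) := by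
  simp [subsetProb_minimal_isDefiniteModel]

lemma reachAllProb_nonneg {q : ℝ} (hq : q ∈ Set.Icc 0 1) (k : ℕ) : 0 ≤ reachAllProb q k := by
  rw [← Fintype.card_fin k, reachAllProb_card]
  exact subsetProb_nonneg hq _

lemma eq_of_mem_definiteViolated_erase {b : HornCode V} {v w : V}
    (hv : b ∈ definiteViolated (Finset.univ.erase v))
    (hw : b ∈ definiteViolated (Finset.univ.erase w)) : v = w := by
  rcases b with ⟨o, u⟩ | s
  · simp only [inl_mem_definiteViolated, Finset.mem_erase, Finset.mem_univ, and_true,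
      not_not] at hv hw
    exact hv.2.symm.trans hw.2
  · exact absurd hv inr_notMem_definiteViolated

lemma subsetProb_forall_not_isDefiniteModel_erase (q : ℝ) (W : Finset V) :
    subsetProb q (fun X => ∀ v ∈ W, ¬ IsDefiniteModel X (Finset.univ.erase v)) =
      (1 - q ^ Fintype.card V) ^ W.card := by
  induction W using Finset.induction_on with
  | empty => simpa using subsetProb_true q
  | insert v W hv ih =>
    have hcard : (definiteViolated (Finset.univ.erase v)).card = Fintype.card V := by
      have hpos : 0 < Fintype.card V := Fintype.card_pos_iff.2 ⟨v⟩
      rw [card_definiteViolated, Finset.card_erase_of_mem (Finset.mem_univ v), Finset.card_univ,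
        Nat.sub_add_cancel hpos, Nat.sub_sub_self hpos]
      exact mul_one _
    rw [Finset.card_insert_of_notMem hv, pow_succ', ← ih, ← hcard, ← subsetProb_and_not_disjoint]
    · exact subsetProb_congr q fun X => by
        rw [Finset.forall_mem_insert, and_comm, IsDefiniteModel]
    · refine fun b hb X => forall₂_congr fun w hw => not_congr ?_
      refine disjoint_insert_left_iff_of_notMem fun hbw => hv ?_
      rwa [eq_of_mem_definiteViolated_erase hb hbw]

lemma reachAllProb_le {q : ℝ} (hq : q ∈ Set.Icc 0 1) (k : ℕ) :
    reachAllProb q k ≤ (1 - q ^ k) ^ k := by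
  have hall := subsetProb_forall_not_isDefiniteModel_erase q (Finset.univ : Finset (Fin k))
  rw [Finset.card_univ, Fintype.card_fin] at hall
  rw [← hall, ← Fintype.card_fin k, reachAllProb_card, Fintype.card_fin]
  refine subsetProb_mono hq fun X hX v _ hv => ?_
  exact Finset.notMem_erase v _ (subset_of_minimal_isDefiniteModel hX hv (Finset.mem_univ v))

lemma leastModelCardProb_nonneg {q : ℝ} (hq : q ∈ Set.Icc 0 1) (N k : ℕ) :
    0 ≤ leastModelCardProb q N k :=
  mul_nonneg (mul_nonneg (Nat.cast_nonneg _) (reachAllProb_nonneg hq k)) (pow_nonneg hq.1 _)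

lemma leastModelCardProb_le_one {q : ℝ} (hq : q ∈ Set.Icc 0 1) (N k : ℕ) :
    leastModelCardProb q N k ≤ 1 := by
  rcases lt_or_ge N k with h | h
  · exact (leastModelCardProb_eq_zero_of_lt q h).trans_le zero_le_one
  · rw [← sum_leastModelCardProb q N]
    exact Finset.single_le_sum (fun i _ => leastModelCardProb_nonneg hq N i)
      (Finset.mem_range_succ_iff.2 h)

lemma choose_mul_pow_mul_pow_le_exp_div {p θ : ℝ} (hp : p ∈ Set.Icc 0 1) (hθ : 0 < θ) (N k : ℕ) :
    (N.choose k : ℝ) * p ^ k * (1 - p) ^ (N - k) ≤ Real.exp (N * p * (θ - 1)) / θ ^ k := by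
  rcases lt_or_ge N k with hNk | hkN
  · rw [Nat.choose_eq_zero_of_lt hNk, Nat.cast_zero, zero_mul, zero_mul]
    positivity
  have hp0 : 0 ≤ p := hp.1
  have hp1 : 0 ≤ 1 - p := sub_nonneg.2 hp.2
  rw [le_div_iff₀ (by positivity)]
  calc (N.choose k : ℝ) * p ^ k * (1 - p) ^ (N - k) * θ ^ k
      = (p * θ) ^ k * (1 - p) ^ (N - k) * N.choose k := by ring
    _ ≤ ∑ j ∈ Finset.range (N + 1), (p * θ) ^ j * (1 - p) ^ (N - j) * N.choose j :=
      Finset.single_le_sum (f := fun j => (p * θ) ^ j * (1 - p) ^ (N - j) * (N.choose j : ℝ))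
        (fun j _ => by positivity) (Finset.mem_range_succ_iff.2 hkN)
    _ = (p * (θ - 1) + 1) ^ N := by
      rw [← add_pow]
      ring
    _ ≤ Real.exp (p * (θ - 1)) ^ N := pow_le_pow_left₀ (by nlinarith) (Real.add_one_le_exp _) N
    _ = Real.exp (N * p * (θ - 1)) := by rw [← Real.exp_nat_mul, mul_assoc]

lemma leastModelCardProb_le_exp_div {q θ : ℝ} (hq : q ∈ Set.Icc 0 1) (hθ : 0 < θ) (N k : ℕ) :
    leastModelCardProb q N k ≤ Real.exp (N * (1 - q ^ k) * (θ - 1)) / θ ^ k := by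
  have hqk : q ^ k ∈ Set.Icc (0 : ℝ) 1 := ⟨pow_nonneg hq.1 k, pow_le_one₀ hq.1 hq.2⟩
  have hp : 1 - q ^ k ∈ Set.Icc (0 : ℝ) 1 := ⟨sub_nonneg.2 hqk.2, sub_le_self _ hqk.1⟩
  have hpow : q ^ ((k + 1) * (N - k)) ≤ (1 - (1 - q ^ k)) ^ (N - k) := by
    rw [sub_sub_cancel, ← pow_mul]
    exact pow_le_pow_of_le_one hq.1 hq.2 (Nat.mul_le_mul_right _ k.le_succ)
  refine le_trans ?_ (choose_mul_pow_mul_pow_le_exp_div hp hθ N k)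
  have := hp.1
  have := hq.1
  unfold leastModelCardProb
  gcongr
  exact reachAllProb_le hq k

end ReachAllProb

section Poissonization

open MeasureTheory ProbabilityTheory
open scoped NNReal

lemma hasSum_poissonMeasure_pow (r : ℝ≥0) (t : ℝ) :
    HasSum (fun j : ℕ => Real.exp (-r) * r ^ j / j.factorial * t ^ j)
      (Real.exp (r * (t - 1))) := by
  have h := (NormedSpace.expSeries_div_hasSum_exp (r * t : ℝ)).mul_left (Real.exp (-r))
  rw [← Real.exp_eq_exp_ℝ, ← Real.exp_add, neg_add_eq_sub, ← mul_sub_one] at h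
  exact h.congr_fun fun j => by rw [mul_pow]; ring

lemma integrable_pow_poissonMeasure (r : ℝ≥0) (t : ℝ) :
    Integrable (fun j : ℕ => t ^ j) Po(r) := by
  refine integrable_poissonMeasure_iff.2 ((hasSum_poissonMeasure_pow r |t|).summable.congr ?_)
  exact fun j => by rw [Real.norm_eq_abs, abs_pow]

lemma integral_pow_poissonMeasure (r : ℝ≥0) (t : ℝ) :
    ∫ j : ℕ, t ^ j ∂Po(r) = Real.exp (r * (t - 1)) := by
  rw [integral_poissonMeasure]
  exact (hasSum_poissonMeasure_pow r t).tsum_eq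

lemma integrable_of_forall_mem_Icc {s : ℕ → ℝ} (hs : ∀ j, s j ∈ Set.Icc 0 1) (r : ℝ≥0) :
    Integrable s Po(r) :=
  .of_bound .of_discrete 1 (.of_forall fun j => by
    rw [Real.norm_of_nonneg (hs j).1]
    exact (hs j).2)

lemma antitone_le_integral_poissonMeasure_add {s : ℕ → ℝ} (hanti : Antitone s)
    (hs : ∀ j, s j ∈ Set.Icc 0 1) (r : ℝ≥0) {θ : ℝ} (hθ : 1 ≤ θ) (m : ℕ) :
    s m ≤ ∫ j, s j ∂Po(r) + Real.exp (r * (θ - 1)) / θ ^ m := by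
  have hpointwise : ∀ j, s m ≤ s j + θ ^ j / θ ^ m := by
    intro j
    rcases le_total j m with hjm | hmj
    · exact le_add_of_le_of_nonneg (hanti hjm) (by positivity)
    · have : 1 ≤ θ ^ j / θ ^ m := (one_le_div (by positivity)).2 (pow_le_pow_right₀ hθ hmj)
      linarith [(hs m).2, (hs j).1]
  have hint := (integrable_pow_poissonMeasure r θ).div_const (θ ^ m)
  have h := integral_mono (integrable_const _) ((integrable_of_forall_mem_Icc hs r).add hint)
    hpointwise
  simpa [integral_add (integrable_of_forall_mem_Icc hs r) hint, integral_div,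
    integral_pow_poissonMeasure] using h

lemma integral_poissonMeasure_le_antitone_add {s : ℕ → ℝ} (hanti : Antitone s)
    (hs : ∀ j, s j ∈ Set.Icc 0 1) (r : ℝ≥0) {θ : ℝ} (hθ0 : 0 < θ) (hθ1 : θ ≤ 1) (m : ℕ) :
    ∫ j, s j ∂Po(r) ≤ s m + Real.exp (r * (θ - 1)) / θ ^ m := by
  have hpointwise : ∀ j, s j ≤ s m + θ ^ j / θ ^ m := by
    intro j
    rcases le_total m j with hmj | hjm
    · exact le_add_of_le_of_nonneg (hanti hmj) (by positivity)
    · have : 1 ≤ θ ^ j / θ ^ m :=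
        (one_le_div (by positivity)).2 (pow_le_pow_of_le_one hθ0.le hθ1 hjm)
      linarith [(hs j).2, (hs m).1]
  have hint := (integrable_pow_poissonMeasure r θ).div_const (θ ^ m)
  have h := integral_mono (integrable_of_forall_mem_Icc hs r) ((integrable_const _).add hint)
    hpointwise
  simpa [integral_add (integrable_const _) hint, integral_div, integral_pow_poissonMeasure] using h

variable {α : Type*} [Fintype α] [DecidableEq α]

open Classical in
/-- The probability that the set of entries of a uniformly random `m`-tuple has the property `E`. -/
noncomputable def tupleProb (E : Finset α → Prop) (m : ℕ) : ℝ :=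
  (Finset.card {F : Fin m → α | E (Finset.univ.image F)} : ℝ) / (Fintype.card α : ℝ) ^ m

lemma tupleProb_mem_Icc (E : Finset α → Prop) (m : ℕ) : tupleProb E m ∈ Set.Icc 0 1 := by
  classical
  refine ⟨by unfold tupleProb; positivity, div_le_one_of_le₀ ?_ (by positivity)⟩
  have h := Finset.card_le_univ {F : Fin m → α | E (Finset.univ.image F)}
  rw [Fintype.card_fun, Fintype.card_fin] at h
  exact_mod_cast h

lemma card_filter_image_succ_le {E : Finset α → Prop} [DecidablePred E] (hE : Antitone E)
    (m : ℕ) :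
    Finset.card {F : Fin (m + 1) → α | E (Finset.univ.image F)} ≤
      Fintype.card α * Finset.card {F : Fin m → α | E (Finset.univ.image F)} := by
  rw [← Finset.card_univ, ← Finset.card_product]
  refine Finset.card_le_card_of_injOn _ (fun F hF => ?_)
    (Fin.consEquiv fun _ : Fin (m + 1) => α).symm.injective.injOn
  refine Finset.mem_product.2 ⟨Finset.mem_univ _, Finset.mem_filter.2 ⟨Finset.mem_univ _,
    hE (Finset.image_subset_iff.2 fun i _ => ?_) (Finset.mem_filter.1 hF).2⟩⟩
  exact Finset.mem_image_of_mem F (Finset.mem_univ i.succ)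

lemma tupleProb_antitone {E : Finset α → Prop} (hE : Antitone E) : Antitone (tupleProb E) := by
  classical
  refine antitone_nat_of_succ_le fun m => ?_
  rcases (Fintype.card α).eq_zero_or_pos with h0 | hpos
  · simpa [tupleProb, h0] using (tupleProb_mem_Icc E m).1
  have hN : (0 : ℝ) < Fintype.card α := by exact_mod_cast hpos
  unfold tupleProb
  rw [pow_succ', ← div_div]
  gcongr
  rw [div_le_iff₀' hN]
  exact_mod_cast card_filter_image_succ_le hE m

open Classical in
lemma tupleProb_eq_sum (E : Finset α → Prop) (m : ℕ) :
    tupleProb E m = ∑ X with E X, tupleProb (· = X) m := by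
  unfold tupleProb
  rw [← Finset.sum_div, ← Nat.cast_sum,
    Finset.card_eq_sum_card_fiberwise (t := Finset.univ.filter E) fun F hF => by simpa using hF]
  congr 2
  refine Finset.sum_congr rfl fun X hX => congrArg Finset.card (Finset.ext fun F => ?_)
  simp only [Finset.mem_filter, Finset.mem_univ, true_and]
  exact and_iff_right_of_imp fun hF => hF ▸ (Finset.mem_filter.1 hX).2

lemma tupleProb_subset (Y : Finset α) (m : ℕ) :
    tupleProb (· ⊆ Y) m = ((Y.card : ℝ) / Fintype.card α) ^ m := by
  classical
  have hpi : ({F : Fin m → α | Finset.univ.image F ⊆ Y} : Finset _) =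
      Fintype.piFinset fun _ => Y := by
    ext F
    simp [Finset.image_subset_iff, Fintype.mem_piFinset]
  rw [div_pow, ← Nat.cast_pow, ← Fintype.card_piFinset_const, ← hpi, tupleProb]
  congr!

lemma integrable_tupleProb (E : Finset α → Prop) (r : ℝ≥0) : Integrable (tupleProb E) Po(r) :=
  integrable_of_forall_mem_Icc (tupleProb_mem_Icc E) r

lemma integral_tupleProb_eq [Nonempty α] (r : ℝ≥0) (Y : Finset α) :
    ∫ m, tupleProb (· = Y) m ∂Po(r) = subsetWeight (Real.exp (-r / Fintype.card α)) Y := by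
  classical
  induction Y using Finset.strongInduction with
  | H Y ih =>
    refine apply_eq_of_sum_powerset_eq ?_ ih
    rw [sum_powerset_subsetWeight, ← integral_finsetSum _ fun X _ => integrable_tupleProb _ r]
    have hsubset : ∀ m, ∑ X ∈ Y.powerset, tupleProb (· = X) m =
        ((Y.card : ℝ) / Fintype.card α) ^ m := by
      intro m
      rw [← tupleProb_subset, tupleProb_eq_sum]
      congr! 1
      ext X
      simp
    simp only [hsubset, integral_pow_poissonMeasure]
    rw [← Real.exp_nat_mul, Nat.cast_sub (Finset.card_le_univ Y)]
    congr 1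
    field

lemma integral_tupleProb [Nonempty α] (r : ℝ≥0) (E : Finset α → Prop) :
    ∫ m, tupleProb E m ∂Po(r) = subsetProb (Real.exp (-r / Fintype.card α)) E := by
  classical
  simp only [tupleProb_eq_sum E]
  rw [integral_finsetSum _ fun X _ => integrable_tupleProb _ r, subsetProb]
  exact Finset.sum_congr rfl fun X _ => integral_tupleProb_eq r X

lemma tupleProb_le_subsetProb_add [Nonempty α] {E : Finset α → Prop} (hE : Antitone E) {r θ : ℝ}
    (hr : 0 ≤ r) (hθ : 1 ≤ θ) (m : ℕ) :
    tupleProb E m ≤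
      subsetProb (Real.exp (-r / Fintype.card α)) E + Real.exp (r * (θ - 1)) / θ ^ m := by
  lift r to ℝ≥0 using hr
  rw [← integral_tupleProb]
  exact antitone_le_integral_poissonMeasure_add (tupleProb_antitone hE) (tupleProb_mem_Icc E) r hθ m

lemma subsetProb_le_tupleProb_add [Nonempty α] {E : Finset α → Prop} (hE : Antitone E) {r θ : ℝ}
    (hr : 0 ≤ r) (hθ0 : 0 < θ) (hθ1 : θ ≤ 1) (m : ℕ) :
    subsetProb (Real.exp (-r / Fintype.card α)) E ≤
      tupleProb E m + Real.exp (r * (θ - 1)) / θ ^ m := by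
  lift r to ℝ≥0 using hr
  rw [← integral_tupleProb]
  exact integral_poissonMeasure_le_antitone_add (tupleProb_antitone hE) (tupleProb_mem_Icc E) r
    hθ0 hθ1 m

end Poissonization

section Encoding

variable {n : ℕ}

namespace HornCode

/-- The clause described by a code. -/
def toClause : HornCode (Fin n) → Clause n
  | Sum.inl (o, v) => insert (v, true) (o.toFinset.image (·, false))
  | Sum.inr s => s.toFinset.image (·, false)

lemma true_mem_toClause_inl {o : Option (Fin n)} {v w : Fin n} :
    (w, true) ∈ toClause (Sum.inl (o, v)) ↔ w = v := by
  simp [toClause]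

lemma false_mem_toClause_inl {o : Option (Fin n)} {v w : Fin n} :
    (w, false) ∈ toClause (Sum.inl (o, v)) ↔ w ∈ o := by
  simp [toClause]

lemma true_notMem_toClause_inr {s : Sym2 (Fin n)} {w : Fin n} :
    (w, true) ∉ toClause (Sum.inr s) := by
  simp [toClause]

lemma false_mem_toClause_inr {s : Sym2 (Fin n)} {w : Fin n} :
    (w, false) ∈ toClause (Sum.inr s) ↔ w ∈ s := by
  simp [toClause]

lemma toClause_inr_mk (u v : Fin n) :
    toClause (Sum.inr s(u, v)) = {(u, false), (v, false)} := by
  rw [toClause, Sym2.toFinset_mk_eq, Finset.image_insert, Finset.image_singleton]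

lemma toClause_inl_ne_toClause_inr (c : Option (Fin n) × Fin n) (s : Sym2 (Fin n)) :
    toClause (Sum.inl c) ≠ toClause (Sum.inr s) := fun h =>
  true_notMem_toClause_inr (h ▸ true_mem_toClause_inl.2 (rfl : c.2 = c.2))

lemma toClause_injective : Function.Injective (toClause (n := n)) := by
  rintro (⟨o, v⟩ | s) (⟨o', v'⟩ | s') h
  · have hhead : v = v' := true_mem_toClause_inl.1 (h ▸ true_mem_toClause_inl.2 rfl)
    have hbody : o = o' := Option.ext fun w => by
      rw [← Option.mem_def, ← Option.mem_def, ← false_mem_toClause_inl (v := v), h,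
        false_mem_toClause_inl]
    rw [hhead, hbody]
  · exact absurd h (toClause_inl_ne_toClause_inr _ _)
  · exact absurd h.symm (toClause_inl_ne_toClause_inr _ _)
  · exact congrArg Sum.inr (Sym2.ext fun w => by
      rw [← false_mem_toClause_inr, h, false_mem_toClause_inr])

lemma isHornClause_toClause (c : HornCode (Fin n)) : IsHornClause c.toClause := by
  rcases c with ⟨o, v⟩ | s
  · have hpos : ∀ l ∈ (toClause (Sum.inl (o, v))).filter fun l => l.2 = true, l = (v, true) := by
      rintro ⟨w, b⟩ hw
      obtain ⟨hw, rfl⟩ := Finset.mem_filter.1 hw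
      rw [true_mem_toClause_inl.1 hw]
    exact ⟨⟨(v, true), true_mem_toClause_inl.2 rfl⟩,
      Finset.card_le_one.2 fun l hl l' hl' => (hpos l hl).trans (hpos l' hl').symm⟩
  · refine ⟨⟨(s.out.1, false), false_mem_toClause_inr.2 s.out_fst_mem⟩, ?_⟩
    rw [Finset.filter_eq_empty_iff.2, Finset.card_empty]
    · exact zero_le_one
    · rintro ⟨w, b⟩ hw rfl
      exact true_notMem_toClause_inr hw

lemma card_toClause_le (c : HornCode (Fin n)) : c.toClause.card ≤ 2 := by
  rcases c with ⟨_ | u, v⟩ | ⟨u, v⟩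
  · simp [toClause]
  · simp [toClause]
  · exact toClause_inr_mk u v ▸ Finset.card_le_two

lemma exists_toClause_eq_of_true_mem {C : Clause n} {v : Fin n} (hv : (v, true) ∈ C)
    (hC : IsHornClause C) (hcard : C.card ≤ 2) : ∃ c : HornCode (Fin n), c.toClause = C := by
  have hbody : (C.erase (v, true)).card ≤ 1 := by
    rw [Finset.card_erase_of_mem hv]
    exact Nat.sub_le_of_le_add hcard
  rcases Nat.le_one_iff_eq_zero_or_eq_one.1 hbody with h | h
  · refine ⟨Sum.inl (none, v), ?_⟩
    rw [← Finset.insert_erase hv, Finset.card_eq_zero.1 h]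
    rfl
  · obtain ⟨⟨u, b⟩, hu⟩ := Finset.card_eq_one.1 h
    obtain ⟨hne, huC⟩ := Finset.mem_erase.1 (hu ▸ Finset.mem_singleton_self (u, b))
    cases b with
    | true =>
      exact absurd (Finset.card_le_one.1 hC.2 (u, true) (Finset.mem_filter.2 ⟨huC, rfl⟩) (v, true)
        (Finset.mem_filter.2 ⟨hv, rfl⟩)) hne
    | false =>
      refine ⟨Sum.inl (some u, v), ?_⟩
      rw [← Finset.insert_erase hv, hu]
      rfl

lemma exists_toClause_eq_of_forall_true_notMem {C : Clause n} (hneg : ∀ v, (v, true) ∉ C)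
    (hC : C.Nonempty) (hcard : C.card ≤ 2) : ∃ c : HornCode (Fin n), c.toClause = C := by
  have hfalse : ∀ l ∈ C, l.2 = false := fun l hl =>
    Bool.eq_false_of_not_eq_true fun h => hneg l.1 (h ▸ hl)
  rcases (Nat.succ_le_of_lt hC.card_pos).eq_or_lt with h | h
  · obtain ⟨⟨u, b⟩, rfl⟩ := Finset.card_eq_one.1 h.symm
    obtain rfl : b = false := hfalse (u, b) (by simp)
    exact ⟨Sum.inr s(u, u), by rw [toClause_inr_mk, Finset.pair_eq_singleton]⟩
  · obtain ⟨⟨u, b⟩, ⟨v, b'⟩, -, rfl⟩ := Finset.card_eq_two.1 (hcard.antisymm h)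
    obtain rfl : b = false := hfalse (u, b) (by simp)
    obtain rfl : b' = false := hfalse (v, b') (by simp)
    exact ⟨Sum.inr s(u, v), toClause_inr_mk u v⟩

lemma exists_toClause_eq {C : Clause n} (hC : IsHornClause C) (hcard : C.card ≤ 2) :
    ∃ c : HornCode (Fin n), c.toClause = C := by
  by_cases h : ∃ v, (v, true) ∈ C
  · exact exists_toClause_eq_of_true_mem h.choose_spec hC hcard
  · exact exists_toClause_eq_of_forall_true_notMem (not_exists.1 h) hC.1 hcard

/-- The codes enumerate the Horn clauses of length at most two. -/
noncomputable def equivHornClauseLe (n : ℕ) : HornCode (Fin n) ≃ HornClauseLe n 2 :=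
  Equiv.ofBijective (fun c => ⟨c.toClause, c.isHornClause_toClause, c.card_toClause_le⟩)
    ⟨fun _ _ h => toClause_injective (congrArg Subtype.val h),
      fun C => (exists_toClause_eq C.2.1 C.2.2).imp fun _ => Subtype.ext⟩

end HornCode

lemma satClause_toClause_iff (A : Fin n → Bool) (c : HornCode (Fin n)) :
    SatClause A c.toClause ↔
      c ∉ definiteViolated {v | A v = true} ∧ c ∉ negativeViolated {v | A v = true} := by
  have hliteral : SatClause A c.toClause ↔
      (∃ w, (w, true) ∈ c.toClause ∧ A w = true) ∨ ∃ w, (w, false) ∈ c.toClause ∧ A w = false := by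
    simp only [SatClause, Prod.exists, Bool.exists_bool, exists_or, or_comm]
  rw [hliteral]
  rcases c with ⟨o, v⟩ | s
  · simp only [HornCode.true_mem_toClause_inl, HornCode.false_mem_toClause_inl,
      inl_mem_definiteViolated, inl_notMem_negativeViolated, Finset.mem_filter, Finset.mem_univ,
      true_and, not_and_or, not_forall, not_false_eq_true, and_true,
      exists_eq_left, exists_prop, Bool.not_eq_true, Bool.not_eq_false]
    exact or_comm
  · simp only [HornCode.true_notMem_toClause_inr, HornCode.false_mem_toClause_inr,
      inr_notMem_definiteViolated, inr_mem_negativeViolated, Finset.mem_sym2_iff, Finset.mem_filter,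
      Finset.mem_univ, true_and, not_forall, not_false_eq_true, exists_prop, Bool.not_eq_true,
      false_and, exists_false, false_or]

lemma satFormula_equivHornClauseLe_iff {m : ℕ} (F : Fin m → HornCode (Fin n)) :
    SatFormula (fun i => HornCode.equivHornClauseLe n (F i)) ↔
      HornSatisfiable (Finset.univ.image F) := by
  have hassignment : ∀ A : Fin n → Bool,
      (∀ i, SatClause A (HornCode.equivHornClauseLe n (F i)).1) ↔
        IsDefiniteModel (Finset.univ.image F) {v | A v = true} ∧
          Disjoint (Finset.univ.image F) (negativeViolated {v | A v = true}) := by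
    intro A
    simp only [IsDefiniteModel, Finset.disjoint_left, Finset.mem_image, Finset.mem_univ, true_and,
      forall_exists_index, forall_apply_eq_imp_iff, ← forall_and]
    exact forall_congr' fun i => satClause_toClause_iff A (F i)
  refine ⟨fun ⟨A, hA⟩ => ⟨_, (hassignment A).1 hA⟩, fun ⟨S, hS⟩ => ⟨fun v => v ∈ S, ?_⟩⟩
  rw [hassignment]
  simpa using hS

lemma hornSatisfiable_antitone {V : Type*} [Fintype V] [DecidableEq V] :
    Antitone (HornSatisfiable (V := V)) :=
  fun _ _ hXY ⟨S, hS, hneg⟩ => ⟨S, hS.mono_left hXY, hneg.mono_left hXY⟩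

lemma satProb_two_eq_tupleProb (n m : ℕ) :
    satProb 2 n m = tupleProb (HornSatisfiable (V := Fin n)) m := by
  classical
  have hsat : Nat.card {F : Fin m → HornClauseLe n 2 // SatFormula F} =
      Finset.card {F : Fin m → HornCode (Fin n) | HornSatisfiable (Finset.univ.image F)} := by
    rw [← Fintype.card_subtype, ← Nat.card_eq_fintype_card]
    let e : (Fin m → HornCode (Fin n)) ≃ (Fin m → HornClauseLe n 2) :=
      .piCongrRight fun _ => HornCode.equivHornClauseLe n
    exact (Nat.card_congr (e.subtypeEquiv fun F => (satFormula_equivHornClauseLe_iff F).symm)).symm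
  have htotal : Nat.card (Fin m → HornClauseLe n 2) = Fintype.card (HornCode (Fin n)) ^ m := by
    rw [Nat.card_fun, ← Nat.card_congr (HornCode.equivHornClauseLe n), Nat.card_eq_fintype_card,
      Nat.card_fin]
  rw [satProb, tupleProb, hsat, htotal, Nat.cast_pow]

end Encoding

section Domination

lemma exp_neg_mem_Icc {a : ℝ} (ha : 0 ≤ a) : Real.exp (-a) ∈ Set.Icc 0 1 :=
  ⟨(Real.exp_pos _).le, Real.exp_le_one_iff.2 (neg_nonpos.2 ha)⟩

lemma one_sub_exp_neg_pow_le (a : ℝ) (k : ℕ) : 1 - Real.exp (-a) ^ k ≤ k * a := by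
  rw [← Real.exp_nat_mul]
  linarith [Real.add_one_le_exp (k * -a)]

lemma le_one_sub_exp_neg {y d : ℝ} (hy : 0 ≤ y) (hyd : y ≤ d - 1) :
    y / d ≤ 1 - Real.exp (-y) := by
  have hexp : Real.exp (-y) ≤ (1 + y)⁻¹ := by
    rw [Real.exp_neg]
    exact inv_anti₀ (by linarith) (by linarith [Real.add_one_le_exp y])
  calc y / d ≤ y / (1 + y) := by gcongr; linarith
    _ = 1 - (1 + y)⁻¹ := by field
    _ ≤ 1 - Real.exp (-y) := by linarith

lemma leastModelCardProb_le_of_mul_le {a b : ℝ} {N : ℕ} (ha : 0 ≤ a) (hb : b ∈ Set.Ioo 0 1)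
    (hNa : N * a ≤ b) (k : ℕ) :
    leastModelCardProb (Real.exp (-a)) N k ≤ (Real.exp (1 - b) * b) ^ k := by
  have hb0 : 0 < b := hb.1
  refine (leastModelCardProb_le_exp_div (exp_neg_mem_Icc ha) (inv_pos.2 hb0) N k).trans ?_
  have hexponent : N * (1 - Real.exp (-a) ^ k) * (b⁻¹ - 1) ≤ k * (1 - b) :=
    calc N * (1 - Real.exp (-a) ^ k) * (b⁻¹ - 1) ≤ N * (k * a) * (b⁻¹ - 1) := by
          have : 0 ≤ b⁻¹ - 1 := sub_nonneg.2 (one_le_inv_iff₀.2 ⟨hb0, hb.2.le⟩)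
          gcongr
          exact one_sub_exp_neg_pow_le a k
      _ = N * a * (k * (b⁻¹ - 1)) := by ring
      _ ≤ b * (k * (b⁻¹ - 1)) := by
          have : 0 ≤ b⁻¹ - 1 := sub_nonneg.2 (one_le_inv_iff₀.2 ⟨hb0, hb.2.le⟩)
          gcongr
      _ = k * (1 - b) := by field
  rw [inv_pow, div_inv_eq_mul, mul_pow, ← Real.exp_nat_mul (1 - b)]
  gcongr

lemma leastModelCardProb_le_of_mul_eq {a l d : ℝ} {N k : ℕ} (ha : 0 ≤ a) (hl : 1 < l)
    (hNa : N * a = l) (hd : 1 < d) (hk : k * a ≤ d - 1) :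
    leastModelCardProb (Real.exp (-a)) N k ≤ Real.exp (-((l - 1) / d - Real.log l)) ^ k := by
  have hl0 : 0 < l := one_pos.trans hl
  refine (leastModelCardProb_le_exp_div (exp_neg_mem_Icc ha) (inv_pos.2 hl0) N k).trans ?_
  have hexponent : k * a / d ≤ 1 - Real.exp (-a) ^ k := by
    rw [← Real.exp_nat_mul, mul_neg]
    exact le_one_sub_exp_neg (by positivity) hk
  calc Real.exp (N * (1 - Real.exp (-a) ^ k) * (l⁻¹ - 1)) / l⁻¹ ^ k
      ≤ Real.exp (N * (k * a / d) * (l⁻¹ - 1)) / l⁻¹ ^ k := by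
        have : l⁻¹ - 1 ≤ 0 := sub_nonpos.2 (inv_le_one_of_one_le₀ hl.le)
        gcongr Real.exp ?_ / _
        exact mul_le_mul_of_nonpos_right (by gcongr) this
    _ = Real.exp (-((l - 1) / d) * k) * Real.exp (Real.log l * k) := by
        rw [inv_pow, div_inv_eq_mul, ← Real.rpow_def_of_pos hl0, Real.rpow_natCast]
        congr 2
        calc N * (k * a / d) * (l⁻¹ - 1) = N * a * k / d * (l⁻¹ - 1) := by ring
          _ = -((l - 1) / d) * k := by rw [hNa]; field
    _ = Real.exp (-((l - 1) / d - Real.log l)) ^ k := by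
        rw [← Real.exp_add, ← Real.exp_nat_mul]
        ring_nf

lemma exp_neg_pow_choose_two_le {a δ : ℝ} {k : ℕ} (ha : 0 ≤ a) (hk : δ ≤ k * a) :
    Real.exp (-a) ^ (k + 1).choose 2 ≤ Real.exp (-(δ / 2)) ^ k := by
  rw [← Real.exp_nat_mul, ← Real.exp_nat_mul, Nat.cast_choose_two, Real.exp_le_exp]
  push_cast
  nlinarith [mul_le_mul_of_nonneg_left hk k.cast_nonneg, mul_nonneg k.cast_nonneg ha]

lemma exists_leastModelCardProb_mul_le_pow {l : ℝ} (hl : 1 < l) :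
    ∃ ρ ∈ Set.Ioo (0 : ℝ) 1, ∀ (a : ℝ) (N k : ℕ), 0 ≤ a → N * a = l →
      leastModelCardProb (Real.exp (-a)) N k * Real.exp (-a) ^ (k + 1).choose 2 ≤ ρ ^ k := by
  obtain ⟨d, hd1, hd⟩ := exists_between
    ((one_lt_div (Real.log_pos hl)).2 (Real.log_lt_sub_one_of_pos (by linarith) hl.ne'))
  have hlog : Real.log l < (l - 1) / d := (lt_div_comm₀ (by linarith) (Real.log_pos hl)).1 hd
  refine ⟨Real.exp (-min ((l - 1) / d - Real.log l) ((d - 1) / 2)), ⟨Real.exp_pos _, ?_⟩,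
    fun a N k ha hNa => ?_⟩
  · rw [Real.exp_lt_one_iff, neg_lt_zero]
    exact lt_min (by linarith) (by linarith)
  have hq := exp_neg_mem_Icc ha
  rcases le_total (k * a) (d - 1) with hk | hk
  · calc _ ≤ leastModelCardProb (Real.exp (-a)) N k :=
          mul_le_of_le_one_right (leastModelCardProb_nonneg hq N k) (pow_le_one₀ hq.1 hq.2)
      _ ≤ _ := leastModelCardProb_le_of_mul_eq ha hl hNa hd1 hk
      _ ≤ _ := by gcongr; exact min_le_left _ _
  · calc _ ≤ Real.exp (-a) ^ (k + 1).choose 2 :=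
          mul_le_of_le_one_left (pow_nonneg hq.1 _) (leastModelCardProb_le_one hq N k)
      _ ≤ _ := exp_neg_pow_choose_two_le ha hk
      _ ≤ _ := by gcongr; exact min_le_right _ _

end Domination

section Asymptotics

lemma tendsto_natCast_sub_div {N : ℕ → ℕ} {y : ℝ}
    (hN : Tendsto (fun n : ℕ => (N n : ℝ) / n) atTop (𝓝 y)) (k : ℕ) :
    Tendsto (fun n : ℕ => ((N n - k : ℕ) : ℝ) / n) atTop (𝓝 y) := by
  have hlower := hN.sub (tendsto_const_div_atTop_nhds_zero_nat (k : ℝ))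
  rw [sub_zero] at hlower
  refine tendsto_of_tendsto_of_tendsto_of_le_of_le hlower hN (fun n => ?_) (fun n => ?_)
  · dsimp only
    rw [← sub_div]
    gcongr
    exact tsub_le_iff_right.2 (by exact_mod_cast le_tsub_add)
  · dsimp only
    gcongr
    exact Nat.sub_le _ _

lemma tendsto_choose_div_pow {N : ℕ → ℕ} {y : ℝ}
    (hN : Tendsto (fun n : ℕ => (N n : ℝ) / n) atTop (𝓝 y)) (k : ℕ) :
    Tendsto (fun n : ℕ => ((N n).choose k : ℝ) / (n : ℝ) ^ k) atTop
      (𝓝 (y ^ k / k.factorial)) := by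
  induction k with
  | zero => simp
  | succ k ih =>
    have hstep := (ih.mul (tendsto_natCast_sub_div hN k)).div_const ((k : ℝ) + 1)
    convert hstep using 2 with n
    · have hchoose : ((N n).choose (k + 1) : ℝ) * (k + 1) = (N n).choose k * (N n - k : ℕ) := by
        exact_mod_cast Nat.choose_succ_right_eq (N n) k
      rw [eq_div_iff (by positivity), div_mul_eq_mul_div, hchoose, pow_succ, mul_div_mul_comm]
    · rw [Nat.factorial_succ]
      push_cast
      field

lemma tendsto_exp_neg_div_pow (l : ℝ) {M : ℕ → ℕ} {z : ℝ}
    (hM : Tendsto (fun n : ℕ => (M n : ℝ) / n) atTop (𝓝 z)) :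
    Tendsto (fun n : ℕ => Real.exp (-(l / n)) ^ M n) atTop (𝓝 (Real.exp (-(l * z)))) := by
  refine ((Real.continuous_exp.tendsto _).comp (hM.const_mul l).neg).congr fun n => ?_
  rw [Function.comp_apply, ← Real.exp_nat_mul]
  ring_nf

lemma tendsto_choose_div_pow_mul_exp_pow (l : ℝ) {N : ℕ → ℕ} {y : ℝ}
    (hN : Tendsto (fun n : ℕ => (N n : ℝ) / n) atTop (𝓝 y)) (k : ℕ) :
    Tendsto (fun n : ℕ => ((N n).choose k : ℝ) / (n : ℝ) ^ k *
        Real.exp (-(l / n)) ^ ((k + 1) * (N n - k))) atTop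
      (𝓝 (y ^ k / k.factorial * Real.exp (-(l * ((k + 1) * y))))) := by
  refine (tendsto_choose_div_pow hN k).mul (tendsto_exp_neg_div_pow l ?_)
  refine ((tendsto_natCast_sub_div hN k).const_mul ((k : ℝ) + 1)).congr fun n => ?_
  push_cast
  ring

lemma reachAllProb_exp_neg_le {a : ℝ} (ha : 0 ≤ a) (k : ℕ) :
    reachAllProb (Real.exp (-a)) k ≤ (k * a) ^ k := by
  have hq := exp_neg_mem_Icc ha
  refine (reachAllProb_le hq k).trans ?_
  gcongr
  · exact sub_nonneg.2 (pow_le_one₀ hq.1 hq.2)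
  · exact one_sub_exp_neg_pow_le a k

lemma abs_reachAllProb_mul_pow_le {l : ℝ} (hl : 0 ≤ l) {n : ℕ} (hn : n ≠ 0) (k : ℕ) :
    |reachAllProb (Real.exp (-(l / n))) k * (n : ℝ) ^ k| ≤ (k * l) ^ k := by
  have ha : 0 ≤ l / n := by positivity
  have hreach := reachAllProb_nonneg (exp_neg_mem_Icc ha) k
  rw [abs_of_nonneg (by positivity)]
  calc _ ≤ (k * (l / n)) ^ k * (n : ℝ) ^ k := by
        gcongr
        exact reachAllProb_exp_neg_le ha k
    _ = (k * l) ^ k := by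
        rw [← mul_pow]
        field_simp

lemma tendsto_leastModelCardProb_mul_sub {l x : ℝ} (hl : 0 ≤ l) (hx : 0 < x)
    (hlx : Real.log x = l * (x - 1)) (k : ℕ) :
    Tendsto (fun n : ℕ =>
      leastModelCardProb (Real.exp (-(l / n))) n k * Real.exp (-(l / n)) ^ (k + 1).choose 2 -
        x * leastModelCardProb (Real.exp (-(l / n))) ⌊x * n⌋₊ k) atTop (𝓝 0) := by
  have hid : Tendsto (fun n : ℕ => (n : ℝ) / n) atTop (𝓝 1) := by
    refine tendsto_const_nhds.congr' ?_
    filter_upwards [eventually_ne_atTop 0] with n hn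
    rw [div_self (Nat.cast_ne_zero.2 hn)]
  have hfloor : Tendsto (fun n : ℕ => (⌊x * n⌋₊ : ℝ) / n) atTop (𝓝 x) :=
    (tendsto_nat_floor_mul_div_atTop hx.le).comp tendsto_natCast_atTop_atTop
  have hlarge := (tendsto_choose_div_pow_mul_exp_pow l hid k).mul
    (tendsto_exp_neg_div_pow l (tendsto_const_div_atTop_nhds_zero_nat ((k + 1).choose 2 : ℝ)))
  have hsmall := (tendsto_choose_div_pow_mul_exp_pow l hfloor k).const_mul x
  have hlimits : x * (x ^ k / k.factorial * Real.exp (-(l * ((k + 1) * x)))) =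
      1 ^ k / k.factorial * Real.exp (-(l * ((k + 1) * 1))) * Real.exp (-(l * 0)) := by
    have hxpow : x ^ (k + 1) = Real.exp ((k + 1) * (l * (x - 1))) := by
      rw [← hlx, ← Nat.cast_succ, Real.exp_nat_mul, Real.exp_log hx]
    calc _ = x ^ (k + 1) * Real.exp (-(l * ((k + 1) * x))) / k.factorial := by ring
      _ = _ := by
        rw [hxpow, ← Real.exp_add, one_pow, mul_assoc, ← Real.exp_add]
        ring_nf
  have hdiff := hlarge.sub hsmall
  rw [hlimits, sub_self] at hdiff
  have hbounded : ∀ᶠ n : ℕ in atTop,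
      |reachAllProb (Real.exp (-(l / n))) k * (n : ℝ) ^ k| ≤ (k * l) ^ k := by
    filter_upwards [eventually_ne_atTop 0] with n hn using abs_reachAllProb_mul_pow_le hl hn k
  refine (bdd_le_mul_tendsto_zero' _ hbounded hdiff).congr' ?_
  filter_upwards [eventually_ne_atTop 0] with n hn
  simp only [leastModelCardProb]
  field

lemma hasSum_leastModelCardProb (q : ℝ) (N : ℕ) : HasSum (leastModelCardProb q N) 1 := by
  rw [← sum_leastModelCardProb q N]
  exact hasSum_sum_of_ne_finset_zero fun k hk =>
    leastModelCardProb_eq_zero_of_lt q (by simpa using hk)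

lemma hasSum_subsetProb_hornSatisfiable (q : ℝ) (V : Type*) [Fintype V] [DecidableEq V] :
    HasSum (fun k => leastModelCardProb q (Fintype.card V) k * q ^ (k + 1).choose 2)
      (subsetProb q fun X : Finset (HornCode V) => HornSatisfiable X) := by
  rw [subsetProb_hornSatisfiable]
  refine hasSum_sum_of_ne_finset_zero fun k hk => ?_
  rw [leastModelCardProb_eq_zero_of_lt q (by simpa using hk), zero_mul]

lemma exists_summable_norm_leastModelCardProb_mul_sub_le {l x : ℝ} (hl : 1 < l) (hx : 0 < x)
    (hlx : l * x < 1) :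
    ∃ bound : ℕ → ℝ, Summable bound ∧ ∀ᶠ n : ℕ in atTop, ∀ k,
      ‖leastModelCardProb (Real.exp (-(l / n))) n k * Real.exp (-(l / n)) ^ (k + 1).choose 2 -
        x * leastModelCardProb (Real.exp (-(l / n))) ⌊x * n⌋₊ k‖ ≤ bound k := by
  have hlx0 : 0 < l * x := by positivity
  have hratio : Real.exp (1 - l * x) * (l * x) < 1 := by
    rw [← lt_inv_mul_iff₀ (Real.exp_pos _), ← Real.exp_neg, mul_one]
    linarith [Real.add_one_lt_exp (show -(1 - l * x) ≠ 0 by linarith)]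
  obtain ⟨ρ, hρ, hlarge⟩ := exists_leastModelCardProb_mul_le_pow hl
  refine ⟨fun k => ρ ^ k + x * (Real.exp (1 - l * x) * (l * x)) ^ k,
    (summable_geometric_of_lt_one hρ.1.le hρ.2).add
      ((summable_geometric_of_lt_one (by positivity) hratio).mul_left x), ?_⟩
  filter_upwards [eventually_ne_atTop 0] with n hn k
  have hn' : (n : ℝ) ≠ 0 := Nat.cast_ne_zero.2 hn
  have ha : 0 ≤ l / n := by positivity
  have hq := exp_neg_mem_Icc ha
  have hfloor : ⌊x * n⌋₊ * (l / n) ≤ l * x :=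
    calc ⌊x * n⌋₊ * (l / n) ≤ x * n * (l / n) := by
          gcongr
          exact Nat.floor_le (by positivity)
      _ = l * x := by field
  refine (norm_sub_le _ _).trans ?_
  rw [Real.norm_of_nonneg (mul_nonneg (leastModelCardProb_nonneg hq n k) (pow_nonneg hq.1 _)),
    Real.norm_of_nonneg (mul_nonneg hx.le (leastModelCardProb_nonneg hq _ k))]
  gcongr
  · exact hlarge _ n k ha (mul_div_cancel₀ l hn')
  · exact leastModelCardProb_le_of_mul_le ha ⟨hlx0, hlx⟩ hfloor k

lemma tendsto_subsetProb_hornSatisfiable {l x : ℝ} (hl : 1 < l) (hx : 0 < x) (hlx1 : l * x < 1)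
    (hlx : Real.log x = l * (x - 1)) :
    Tendsto (fun n : ℕ => subsetProb (Real.exp (-(l / n)))
      (fun X : Finset (HornCode (Fin n)) => HornSatisfiable X)) atTop (𝓝 x) := by
  obtain ⟨bound, hsummable, hbound⟩ :=
    exists_summable_norm_leastModelCardProb_mul_sub_le hl hx hlx1
  have hlim := tendsto_tsum_of_dominated_convergence hsummable
    (tendsto_leastModelCardProb_mul_sub (one_pos.trans hl).le hx hlx) hbound
  rw [tsum_zero] at hlim
  rw [← tendsto_sub_nhds_zero_iff]
  refine hlim.congr fun n => ?_
  have hsat := hasSum_subsetProb_hornSatisfiable (Real.exp (-(l / n))) (Fin n)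
  rw [Fintype.card_fin] at hsat
  have hone := (hasSum_leastModelCardProb (Real.exp (-(l / n))) ⌊x * n⌋₊).mul_left x
  rw [mul_one] at hone
  exact (hsat.sub hone).tsum_eq

end Asymptotics

section Threshold

/-- The function `F₂` of the paper: the slope of the chord of `log` between `x` and `1`. -/
noncomputable def logSecant (x : ℝ) : ℝ :=
  Real.log x / (x - 1)

lemma one_lt_logSecant {x : ℝ} (hx : x ∈ Set.Ioo (0 : ℝ) 1) : 1 < logSecant x := by
  rw [logSecant, one_lt_div_of_neg (sub_neg.2 hx.2)]
  exact Real.log_lt_sub_one_of_pos hx.1 hx.2.ne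

lemma logSecant_mul_lt_one {x : ℝ} (hx : x ∈ Set.Ioo (0 : ℝ) 1) : logSecant x * x < 1 := by
  have hlog := Real.log_lt_sub_one_of_pos (inv_pos.2 hx.1) (inv_ne_one.2 hx.2.ne)
  rw [Real.log_inv, lt_sub_iff_add_lt, ← mul_lt_mul_iff_left₀ hx.1,
    inv_mul_cancel₀ hx.1.ne'] at hlog
  rw [logSecant, div_mul_eq_mul_div, div_lt_one_of_neg (sub_neg.2 hx.2)]
  linarith

lemma strictAntiOn_logSecant : StrictAntiOn logSecant (Set.Ioo 0 1) := by
  intro x hx y hy hxy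
  simpa [logSecant] using strictConcaveOn_log_Ioi.secant_strict_mono (Set.mem_Ioi.2 one_pos)
    hx.1 hy.1 hx.2.ne hy.2.ne hxy

lemma surjOn_logSecant : Set.SurjOn logSecant (Set.Ioo 0 1) (Set.Ioi 1) := by
  intro L hL
  have hL0 : 0 < L := one_pos.trans hL
  have hinv : L⁻¹ < 1 := inv_lt_one_of_one_lt₀ hL
  have hle : Real.exp (-L) ≤ L⁻¹ := by
    rw [Real.exp_neg]
    exact inv_anti₀ hL0 (by linarith [Real.add_one_le_exp L])
  have hcont : ContinuousOn logSecant (Set.Icc (Real.exp (-L)) L⁻¹) :=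
    (Real.continuousOn_log.mono fun x hx => ((Real.exp_pos _).trans_le hx.1).ne').div
      (by fun_prop) fun x hx => (sub_neg.2 (hx.2.trans_lt hinv)).ne
  have hupper : L ≤ logSecant (Real.exp (-L)) := by
    rw [logSecant, Real.log_exp, le_div_iff_of_neg (by linarith)]
    linarith [mul_pos hL0 (Real.exp_pos (-L))]
  have hlower : logSecant L⁻¹ ≤ L := by
    rw [logSecant, Real.log_inv, div_le_iff_of_neg (by linarith), mul_sub_one,
      mul_inv_cancel₀ hL0.ne']
    linarith [Real.log_le_sub_one_of_pos hL0]
  obtain ⟨x, hx, hxL⟩ := intermediate_value_Icc' hle hcont ⟨hlower, hupper⟩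
  exact ⟨x, ⟨(Real.exp_pos _).trans_le hx.1, hx.2.trans_lt hinv⟩, hxL⟩

lemma tendsto_exp_mul_sub_one_div_pow {a c : ℝ} (ha : 0 < a) (hc : 0 < c) (hac : a ≠ c)
    {r : ℕ → ℝ} {m : ℕ → ℕ} (hr : Tendsto (fun n => r n / n) atTop (𝓝 a))
    (hm : Tendsto (fun n => (m n : ℝ) / n) atTop (𝓝 c)) :
    Tendsto (fun n => Real.exp (r n * (c / a - 1)) / (c / a) ^ m n) atTop (𝓝 0) := by
  have hθ : 0 < c / a := by positivity
  have hrate : a * (c / a - 1) - c * Real.log (c / a) < 0 := by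
    have hlog := Real.log_lt_sub_one_of_pos (show 0 < a / c by positivity)
      (fun h => hac ((div_eq_one_iff_eq hc.ne').1 h))
    rw [← inv_div, Real.log_inv, inv_div] at hlog
    calc a * (c / a - 1) - c * Real.log (c / a) = c * (-Real.log (c / a) - (a / c - 1)) := by field
      _ < 0 := mul_neg_of_pos_of_neg hc (sub_neg.2 hlog)
  have hexponent := tendsto_natCast_atTop_atTop.atTop_mul_neg hrate
    ((hr.mul_const (c / a - 1)).sub (hm.mul_const (Real.log (c / a))))
  refine (Real.tendsto_exp_atBot.comp hexponent).congr' ?_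
  filter_upwards [eventually_ne_atTop 0] with n hn
  rw [Function.comp_apply, ← Real.rpow_natCast, Real.rpow_def_of_pos hθ, ← Real.exp_sub]
  congr 1
  field

lemma neg_div_card_hornCode (l : ℝ) (n : ℕ) :
    -(3 / 2 * l * (n + 1)) / Fintype.card (HornCode (Fin n)) = -(l / n) := by
  rw [card_hornCode, Fintype.card_fin]
  push_cast [Nat.cast_choose_two]
  field

lemma tendsto_exp_mul_sub_one_div_pow_floor {l c : ℝ} (hl : 0 < l) (hc : 0 < c)
    (hlc : 3 / 2 * l ≠ c) :
    Tendsto (fun n : ℕ => Real.exp (3 / 2 * l * (n + 1) * (c / (3 / 2 * l) - 1)) /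
      (c / (3 / 2 * l)) ^ ⌊c * (n : ℝ)⌋₊) atTop (𝓝 0) := by
  refine tendsto_exp_mul_sub_one_div_pow (by positivity) hc hlc ?_
    ((tendsto_nat_floor_mul_div_atTop hc.le).comp tendsto_natCast_atTop_atTop)
  have hsum := (tendsto_const_div_atTop_nhds_zero_nat (3 / 2 * l)).const_add (3 / 2 * l)
  rw [add_zero] at hsum
  refine hsum.congr' ?_
  filter_upwards [eventually_ne_atTop 0] with n hn
  field

lemma tendsto_subsetProb_logSecant {x : ℝ} (hx : x ∈ Set.Ioo (0 : ℝ) 1) :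
    Tendsto (fun n : ℕ => subsetProb (Real.exp (-(logSecant x / n)))
      (fun X : Finset (HornCode (Fin n)) => HornSatisfiable X)) atTop (𝓝 x) :=
  tendsto_subsetProb_hornSatisfiable (one_lt_logSecant hx) hx.1 (logSecant_mul_lt_one hx)
    (div_mul_cancel₀ _ (sub_neg.2 hx.2).ne).symm

lemma nonempty_hornCode {n : ℕ} (hn : 0 < n) : Nonempty (HornCode (Fin n)) :=
  ⟨Sum.inl (none, ⟨0, hn⟩)⟩

lemma eventually_lt_satProb {c x y : ℝ} (hc : 0 < c) (hx : x ∈ Set.Ioo (0 : ℝ) 1)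
    (hcx : 2 * c / 3 < logSecant x) (hyx : y < x) :
    ∀ᶠ n : ℕ in atTop, y < satProb 2 n ⌊c * (n : ℝ)⌋₊ := by
  have hl : 0 < logSecant x := one_pos.trans (one_lt_logSecant hx)
  have hlim := (tendsto_subsetProb_logSecant hx).sub
    (tendsto_exp_mul_sub_one_div_pow_floor hl hc (by linarith : c < 3 / 2 * logSecant x).ne')
  rw [sub_zero] at hlim
  filter_upwards [hlim.eventually_const_lt hyx, eventually_gt_atTop 0] with n hy hn
  have := nonempty_hornCode hn
  have hle := subsetProb_le_tupleProb_add (hornSatisfiable_antitone (V := Fin n))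
    (r := 3 / 2 * logSecant x * (n + 1)) (θ := c / (3 / 2 * logSecant x)) (by positivity)
    (by positivity) ((div_le_one (by positivity)).2 (by linarith)) ⌊c * (n : ℝ)⌋₊
  rw [neg_div_card_hornCode] at hle
  rw [satProb_two_eq_tupleProb]
  linarith

lemma eventually_satProb_lt {c x y : ℝ} (hc : 0 < c) (hx : x ∈ Set.Ioo (0 : ℝ) 1)
    (hcx : logSecant x < 2 * c / 3) (hxy : x < y) :
    ∀ᶠ n : ℕ in atTop, satProb 2 n ⌊c * (n : ℝ)⌋₊ < y := by
  have hl : 0 < logSecant x := one_pos.trans (one_lt_logSecant hx)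
  have hlim := (tendsto_subsetProb_logSecant hx).add
    (tendsto_exp_mul_sub_one_div_pow_floor hl hc (by linarith : 3 / 2 * logSecant x < c).ne)
  rw [add_zero] at hlim
  filter_upwards [hlim.eventually_lt_const hxy, eventually_gt_atTop 0] with n hy hn
  have := nonempty_hornCode hn
  have hle := tupleProb_le_subsetProb_add (hornSatisfiable_antitone (V := Fin n))
    (r := 3 / 2 * logSecant x * (n + 1)) (θ := c / (3 / 2 * logSecant x)) (by positivity)
    ((one_le_div (by positivity)).2 (by linarith)) ⌊c * (n : ℝ)⌋₊
  rw [neg_div_card_hornCode] at hle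
  rw [satProb_two_eq_tupleProb]
  linarith

lemma tendsto_satProb_two_one {c : ℝ} (hc : 0 < c) (hc' : c ≤ 3 / 2) :
    Tendsto (fun n : ℕ => satProb 2 n ⌊c * (n : ℝ)⌋₊) atTop (𝓝 1) := by
  refine tendsto_order.2 ⟨fun y hy => ?_, fun y hy => Eventually.of_forall fun n => ?_⟩
  · obtain ⟨x, hyx, hx1⟩ := exists_between (max_lt hy one_pos)
    rw [max_lt_iff] at hyx
    have hx : x ∈ Set.Ioo (0 : ℝ) 1 := ⟨hyx.2, hx1⟩
    exact eventually_lt_satProb hc hx (by linarith [one_lt_logSecant hx]) hyx.1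
  · rw [satProb_two_eq_tupleProb]
    exact (tupleProb_mem_Icc _ _).2.trans_lt hy

lemma tendsto_satProb_two_of_logSecant_eq {c x : ℝ} (hc : 0 < c) (hx : x ∈ Set.Ioo (0 : ℝ) 1)
    (hcx : logSecant x = 2 * c / 3) :
    Tendsto (fun n : ℕ => satProb 2 n ⌊c * (n : ℝ)⌋₊) atTop (𝓝 x) := by
  refine tendsto_order.2 ⟨fun y hy => ?_, fun y hy => ?_⟩
  · obtain ⟨w, hyw, hwx⟩ := exists_between (max_lt hy hx.1)
    rw [max_lt_iff] at hyw
    have hw : w ∈ Set.Ioo (0 : ℝ) 1 := ⟨hyw.2, hwx.trans hx.2⟩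
    exact eventually_lt_satProb hc hw (hcx ▸ strictAntiOn_logSecant hw hx hwx) hyw.1
  · obtain ⟨w, hxw, hwy⟩ := exists_between (lt_min hy hx.2)
    rw [lt_min_iff] at hwy
    have hw : w ∈ Set.Ioo (0 : ℝ) 1 := ⟨hx.1.trans hxw, hwy.2⟩
    exact eventually_satProb_lt hc hw (hcx ▸ strictAntiOn_logSecant hx hw hxw) hwy.1

end Threshold

/-- With `F₂ : (0,1) → (1,∞)`, `F₂(x) = ln x / (x−1)`, the limit as
`n → ∞` of the probability that a random formula from `Ω(2,n,⌊cn⌋)` is satisfiable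
equals `1` if `c ≤ 3/2`, and equals `F₂⁻¹(2c/3)` if `c > 3/2`. -/
theorem horn_sat_prob_two
    (c : ℝ) (hc : 0 < c) :
    (c ≤ 3 / 2 →
      Tendsto (fun n : ℕ => satProb 2 n ⌊c * (n : ℝ)⌋₊) atTop (𝓝 1)) ∧
    (3 / 2 < c →
      ∃ x ∈ Set.Ioo (0 : ℝ) 1, Real.log x / (x - 1) = 2 * c / 3 ∧
        Tendsto (fun n : ℕ => satProb 2 n ⌊c * (n : ℝ)⌋₊) atTop (𝓝 x)) := by
  refine ⟨tendsto_satProb_two_one hc, fun hc' => ?_⟩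
  obtain ⟨x, hx, hcx⟩ := surjOn_logSecant (Set.mem_Ioi.2 (by linarith : 1 < 2 * c / 3))
  exact ⟨x, hx, hcx, tendsto_satProb_two_of_logSecant_eq hc hx hcx⟩
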